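/- arXiv:2304.03370 — 2 statements merged into one kernel-verified Lean document; each statement's English description precedes it below -/
import Mathlib

section
/- Let X be a metric space and H any hypothesis class on X. With respect to metric-ball attacks and the constrained-adversary loss ℓ_CA: (a) there exists a robustly-reliable learner L such that for every target h* ∈ H, every labeled sample S labeled by h*, and every η ≥ 0, RR^L(S,η) ⊇ Agree(H_0(S)); and (b) for every robustly-reliable learner L, every labeled sample S, and every η ≥ 0, RR^L(S,η) ⊆ Agree(H_0(S)). -/
/-- `S` is labeled by `h` : every labeled pair in `S` carries the label `h` assigns. -/
def labeledBy {X : Type*} (S : List (X × Bool)) (h : X → Bool) : Prop :=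
  ∀ p ∈ S, p.2 = h p.1

/-- Version space: hypotheses in `H` consistent with the sample `S`. -/
def versionSpace {X : Type*} (H : Set (X → Bool)) (S : List (X × Bool)) : Set (X → Bool) :=
  {h ∈ H | ∀ p ∈ S, h p.1 = p.2}

/-- Agreement region of a set of hypotheses. -/
def agree {X : Type*} (G : Set (X → Bool)) : Set X :=
  {x | ∀ h₁ ∈ G, ∀ h₂ ∈ G, h₁ x = h₂ x}

/-- Constrained-adversary loss `ℓ_CA^{h*}(h,x,z)`. -/
def lossCA {X : Type*} (hs h : X → Bool) (x z : X) : ℕ :=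
  if h z ≠ hs z ∧ hs z = hs x then 1 else 0

/-- A learner (`hyp`, `rad`) is robustly reliable w.r.t. metric-ball attacks and loss `ℓ`:
the reliability radius takes values in `{-1} ∪ [0,∞]`, and for every target `hs ∈ H` and every
sample labeled by `hs`, (i) if `rad S z > 0` and `dist x z < rad S z` then `ℓ hs (hyp S) x z = 0`,
and (ii) if `rad S z = 0` then `hyp S z = hs z`. -/
def RobustlyReliableBall {X : Type*} [MetricSpace X] (H : Set (X → Bool))
    (ℓ : (X → Bool) → (X → Bool) → X → X → ℕ)
    (hyp : List (X × Bool) → X → Bool) (rad : List (X × Bool) → X → EReal) : Prop :=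
  (∀ S z, rad S z = -1 ∨ 0 ≤ rad S z) ∧
  ∀ hs ∈ H, ∀ S : List (X × Bool), labeledBy S hs →
    (∀ x z : X, 0 < rad S z → ((dist x z : ℝ) : EReal) < rad S z → ℓ hs (hyp S) x z = 0) ∧
    (∀ z : X, rad S z = 0 → hyp S z = hs z)

/-- The robustly-reliable region at level `η` is `{z | rad S z ≥ η}`. -/
def RRregion {X : Type*} (rad : List (X × Bool) → X → EReal)
    (S : List (X × Bool)) (η : ℝ) : Set X :=
  {z | (η : EReal) ≤ rad S z}

section VersionSpace

variable {X : Type*}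

theorem mem_versionSpace_iff_labeledBy {H : Set (X → Bool)} {S : List (X × Bool)} {h : X → Bool} :
    h ∈ versionSpace H S ↔ h ∈ H ∧ labeledBy S h :=
  and_congr_right' (forall₂_congr fun _ _ => eq_comm)

theorem sSup_apply_eq_of_mem_agree {G : Set (X → Bool)} {h : X → Bool} {z : X}
    (hG : h ∈ G) (hz : z ∈ agree G) : sSup G z = h z := by
  rw [sSup_apply]
  exact le_antisymm (iSup_le fun g => (hz g g.2 h hG).le)
    (le_iSup (fun g : G => (g : X → Bool) z) ⟨h, hG⟩)

open Classical in
/-- The reliability radius that guarantees a prediction against balls of every size on the agreement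
region of `G` and abstains elsewhere, abstention being encoded by `-1`. -/
noncomputable def agreementRadius (G : Set (X → Bool)) (z : X) : EReal :=
  if z ∈ agree G then ⊤ else -1

theorem agreementRadius_of_mem {G : Set (X → Bool)} {z : X} (hz : z ∈ agree G) :
    agreementRadius G z = ⊤ :=
  if_pos hz

theorem agreementRadius_of_notMem {G : Set (X → Bool)} {z : X} (hz : z ∉ agree G) :
    agreementRadius G z = -1 :=
  if_neg hz

theorem mem_agree_of_agreementRadius_nonneg {G : Set (X → Bool)} {z : X}
    (h : 0 ≤ agreementRadius G z) : z ∈ agree G := by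
  by_contra hz
  rw [agreementRadius_of_notMem hz, EReal.neg_nonneg] at h
  exact h.not_gt zero_lt_one

theorem agree_subset_RRregion_agreementRadius (H : Set (X → Bool)) (S : List (X × Bool)) (η : ℝ) :
    agree (versionSpace H S) ⊆ RRregion (fun S => agreementRadius (versionSpace H S)) S η :=
  fun _ hz => le_top.trans_eq (agreementRadius_of_mem hz).symm

theorem lossCA_eq_zero_of_eq {hs h : X → Bool} {z : X} (x : X) (hz : h z = hs z) :
    lossCA hs h x z = 0 :=
  if_neg fun hne => hne.1 hz

theorem eq_of_lossCA_self_eq_zero {hs h : X → Bool} {z : X} (hz : lossCA hs h z z = 0) :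
    h z = hs z := by
  simpa [lossCA] using hz

end VersionSpace

section RobustlyReliable

variable {X : Type*} [MetricSpace X] {H : Set (X → Bool)}
  {ℓ : (X → Bool) → (X → Bool) → X → X → ℕ}

theorem robustlyReliableBall_sSup_agreementRadius
    (hℓ : ∀ hs h x z, h z = hs z → ℓ hs h x z = 0) :
    RobustlyReliableBall H ℓ (fun S => sSup (versionSpace H S))
      (fun S => agreementRadius (versionSpace H S)) := by
  refine ⟨fun S z => ?_, fun hs hH S hS => ?_⟩
  · by_cases hz : z ∈ agree (versionSpace H S)
    · exact Or.inr (le_top.trans_eq (agreementRadius_of_mem hz).symm)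
    · exact Or.inl (agreementRadius_of_notMem hz)
  · have correct (z : X) (hz : 0 ≤ agreementRadius (versionSpace H S) z) :
        sSup (versionSpace H S) z = hs z :=
      sSup_apply_eq_of_mem_agree (mem_versionSpace_iff_labeledBy.2 ⟨hH, hS⟩)
        (mem_agree_of_agreementRadius_nonneg hz)
    exact ⟨fun x z hz _ => hℓ _ _ x z (correct z hz.le), fun z hz => correct z hz.ge⟩

variable {hyp : List (X × Bool) → X → Bool} {rad : List (X × Bool) → X → EReal}

theorem RobustlyReliableBall.hyp_eq_of_mem_versionSpace (hL : RobustlyReliableBall H ℓ hyp rad)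
    (hℓ : ∀ hs h z, ℓ hs h z z = 0 → h z = hs z) {S : List (X × Bool)} {h : X → Bool}
    (hh : h ∈ versionSpace H S) {z : X} (hz : 0 ≤ rad S z) : hyp S z = h z := by
  obtain ⟨hH, hS⟩ := mem_versionSpace_iff_labeledBy.1 hh
  obtain ⟨loss_eq_zero, hyp_eq⟩ := hL.2 h hH S hS
  rcases hz.eq_or_lt with hzero | hpos
  · exact hyp_eq z hzero.symm
  · -- The ball of attacks always contains the trivial one, `x = z`.
    have hdist : ((dist z z : ℝ) : EReal) < rad S z := by
      rwa [dist_self, EReal.coe_zero]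
    exact hℓ h (hyp S) z (loss_eq_zero z z hpos hdist)

theorem RobustlyReliableBall.RRregion_subset_agree (hL : RobustlyReliableBall H ℓ hyp rad)
    (hℓ : ∀ hs h z, ℓ hs h z z = 0 → h z = hs z) (S : List (X × Bool)) {η : ℝ} (hη : 0 ≤ η) :
    RRregion rad S η ⊆ agree (versionSpace H S) := by
  intro z hz
  have hrad : 0 ≤ rad S z := (EReal.coe_nonneg.2 hη).trans hz
  -- Every consistent hypothesis may be the target, and `hyp S` depends only on the sample.
  exact fun h₁ hh₁ h₂ hh₂ =>
    (hL.hyp_eq_of_mem_versionSpace hℓ hh₁ hrad).symm.trans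
      (hL.hyp_eq_of_mem_versionSpace hℓ hh₂ hrad)

end RobustlyReliable

theorem rr_region_eq_agreement_CA_general {X : Type*} [MetricSpace X] (H : Set (X → Bool))
    {ℓ : (X → Bool) → (X → Bool) → X → X → ℕ}
    (loss_eq_zero : ∀ hs h x z, h z = hs z → ℓ hs h x z = 0)
    (eq_of_loss_self : ∀ hs h z, ℓ hs h z z = 0 → h z = hs z) :
    (∃ (hyp : List (X × Bool) → X → Bool) (rad : List (X × Bool) → X → EReal),
      RobustlyReliableBall H ℓ hyp rad ∧
      ∀ (S : List (X × Bool)) (η : ℝ), agree (versionSpace H S) ⊆ RRregion rad S η) ∧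
    (∀ (hyp : List (X × Bool) → X → Bool) (rad : List (X × Bool) → X → EReal),
      RobustlyReliableBall H ℓ hyp rad →
      ∀ (S : List (X × Bool)) (η : ℝ), 0 ≤ η →
        RRregion rad S η ⊆ agree (versionSpace H S)) :=
  ⟨⟨fun S => sSup (versionSpace H S), fun S => agreementRadius (versionSpace H S),
      robustlyReliableBall_sSup_agreementRadius loss_eq_zero,
      agree_subset_RRregion_agreementRadius H⟩,
    fun _ _ hL S _ hη => hL.RRregion_subset_agree eq_of_loss_self S hη⟩

/-- Theorem 3.1 (for `ℓ_CA`): (a) there is a robustly-reliable learner whose robustly-reliable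
region contains the agreement region of the version space, at every level `η ≥ 0`, for every
target `h* ∈ H` and every sample labeled by it; (b) for every robustly-reliable learner, every
sample and every `η ≥ 0`, the robustly-reliable region is contained in the agreement region
of the version space. -/
theorem rr_region_eq_agreement_CA {X : Type*} [MetricSpace X] (H : Set (X → Bool)) :
    (∃ (hyp : List (X × Bool) → X → Bool) (rad : List (X × Bool) → X → EReal),
      RobustlyReliableBall H lossCA hyp rad ∧
      ∀ hs ∈ H, ∀ S : List (X × Bool), labeledBy S hs → ∀ η : ℝ, 0 ≤ η →
        agree (versionSpace H S) ⊆ RRregion rad S η) ∧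
    (∀ (hyp : List (X × Bool) → X → Bool) (rad : List (X × Bool) → X → EReal),
      RobustlyReliableBall H lossCA hyp rad →
      ∀ (S : List (X × Bool)) (η : ℝ), 0 ≤ η →
        RRregion rad S η ⊆ agree (versionSpace H S)) := by
  obtain ⟨⟨hyp, rad, hL, hsub⟩, hsup⟩ := rr_region_eq_agreement_CA_general H
    (fun _ _ x _ => lossCA_eq_zero_of_eq x) (fun _ _ _ => eq_of_lossCA_self_eq_zero)
  exact ⟨⟨hyp, rad, hL, fun _ _ S _ η _ => hsub S η⟩, hsup⟩
end

section
/- Let X be a metric space and H any hypothesis class on X. For a labeled sample S and η > 0 define A(S,η) = {z ∈ X : B°(z,η) ⊆ Agree(H_0(S)) and h(x) = h(z) for every x ∈ B°(z,η) and every h ∈ H_0(S)}. With respect to metric-ball attacks and the stability loss ℓ_ST: (a) there exists a robustly-reliable learner L such that for every target h* ∈ H, every labeled sample S labeled by h*, and every η > 0, RR^L(S,η) ⊇ A(S,η); and (b) for every robustly-reliable learner L, every labeled sample S, and every η > 0, RR^L(S,η) ⊆ A(S,η). -/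
/-- Stability loss `ℓ_ST^{h*}(h,x,z)`. -/
def lossST {X : Type*} (hs h : X → Bool) (x z : X) : ℕ :=
  if h z ≠ hs x then 1 else 0

/-- The set `A(S,η)`: points `z` whose open `η`-ball lies in the agreement region of the
version space and on which every version-space hypothesis is constant. -/
def ASet {X : Type*} [MetricSpace X] (H : Set (X → Bool)) (S : List (X × Bool)) (η : ℝ) :
    Set X :=
  {z | Metric.ball z η ⊆ agree (versionSpace H S) ∧
    ∀ x ∈ Metric.ball z η, ∀ h ∈ versionSpace H S, h x = h z}

section VersionSpace

variable {X : Type*} {H : Set (X → Bool)} {S : List (X × Bool)}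

lemma mem_versionSpace_iff {h : X → Bool} : h ∈ versionSpace H S ↔ h ∈ H ∧ labeledBy S h := by
  simp only [versionSpace, labeledBy, Set.mem_ofPred_eq, eq_comm]

lemma lossST_eq_zero_iff {hs h : X → Bool} {x z : X} : lossST hs h x z = 0 ↔ h z = hs x := by
  simp [lossST]

/-- The consistent learner (empirical risk minimizer): it predicts with some member of the version
space, chosen arbitrarily, and with an arbitrary function if the version space is empty. -/
noncomputable def erm (H : Set (X → Bool)) (S : List (X × Bool)) : X → Bool :=
  Classical.epsilon (· ∈ versionSpace H S)

lemma erm_mem_versionSpace (hV : (versionSpace H S).Nonempty) : erm H S ∈ versionSpace H S :=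
  Classical.epsilon_spec hV

end VersionSpace

section MetricBall

variable {X : Type*} [MetricSpace X] {H : Set (X → Bool)} {S : List (X × Bool)} {η : ℝ} {x z : X}

lemma mem_ASet_iff_exists_common_label :
    z ∈ ASet H S η ↔ ∃ b, ∀ h ∈ versionSpace H S, ∀ x ∈ Metric.ball z η, h x = b := by
  constructor
  · rintro ⟨hagree, hconst⟩
    rcases (versionSpace H S).eq_empty_or_nonempty with hV | ⟨h₀, hh₀⟩
    · simp [hV]
    · exact ⟨h₀ z, fun h hh x hx => (hagree hx h hh h₀ hh₀).trans (hconst x hx h₀ hh₀)⟩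
  · rintro ⟨b, hb⟩
    refine ⟨fun x hx h₁ hh₁ h₂ hh₂ => (hb h₁ hh₁ x hx).trans (hb h₂ hh₂ x hx).symm,
      fun x hx h hh => ?_⟩
    have hz : z ∈ Metric.ball z η := Metric.mem_ball_self (Metric.pos_of_mem_ball hx)
    exact (hb h hh x hx).trans (hb h hh z hz).symm

lemma RobustlyReliableBall.hyp_eq_of_dist_lt {hyp : List (X × Bool) → X → Bool}
    {rad : List (X × Bool) → X → EReal} (hL : RobustlyReliableBall H lossST hyp rad)
    {h : X → Bool} (hh : h ∈ versionSpace H S) (hd : (dist x z : EReal) < rad S z) :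
    hyp S z = h x := by
  obtain ⟨hH, hS⟩ := mem_versionSpace_iff.1 hh
  have hpos : 0 < rad S z := (EReal.coe_nonneg.2 dist_nonneg).trans_lt hd
  exact lossST_eq_zero_iff.1 ((hL.2 h hH S hS).1 x z hpos hd)

theorem RobustlyReliableBall.RRregion_subset_ASet {hyp : List (X × Bool) → X → Bool}
    {rad : List (X × Bool) → X → EReal} (hL : RobustlyReliableBall H lossST hyp rad)
    (S : List (X × Bool)) (η : ℝ) : RRregion rad S η ⊆ ASet H S η := by
  intro z (hz : (η : EReal) ≤ rad S z)
  refine mem_ASet_iff_exists_common_label.2 ⟨hyp S z, fun h hh x hx => ?_⟩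
  exact (hL.hyp_eq_of_dist_lt hh ((EReal.coe_lt_coe hx).trans_le hz)).symm

/-- The reliability radius reported by the optimal learner: the supremum of the levels `η > 0` with
`z ∈ A(S,η)`, or the abstention value `-1` if there is no such level. -/
noncomputable def stabilityRadius (H : Set (X → Bool)) (S : List (X × Bool)) (z : X) : EReal :=
  -1 ⊔ ⨆ (η : ℝ) (_ : 0 < η) (_ : z ∈ ASet H S η), (η : EReal)

lemma lt_stabilityRadius_iff {a : EReal} (ha : -1 ≤ a) :
    a < stabilityRadius H S z ↔ ∃ η : ℝ, 0 < η ∧ z ∈ ASet H S η ∧ a < η := by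
  simp only [stabilityRadius, lt_sup_iff, ha.not_gt, false_or, lt_iSup_iff, exists_prop]

lemma ASet_subset_RRregion_stabilityRadius (H : Set (X → Bool)) (S : List (X × Bool))
    (hη : 0 < η) : ASet H S η ⊆ RRregion (stabilityRadius H) S η := fun z hz =>
  show (η : EReal) ≤ stabilityRadius H S z from
    le_sup_of_le_right <| le_iSup_of_le η <| le_iSup_of_le hη <| le_iSup_of_le hz le_rfl

lemma stabilityRadius_eq_neg_one_or_pos (H : Set (X → Bool)) (S : List (X × Bool)) (z : X) :
    stabilityRadius H S z = -1 ∨ 0 < stabilityRadius H S z := by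
  have hge : -1 ≤ stabilityRadius H S z := le_sup_left
  refine hge.eq_or_lt.imp Eq.symm fun hlt => ?_
  obtain ⟨η, hη, hz, -⟩ := (lt_stabilityRadius_iff le_rfl).1 hlt
  exact (EReal.coe_pos.2 hη).trans_le (ASet_subset_RRregion_stabilityRadius H S hη hz)

lemma eq_of_dist_lt_stabilityRadius {h₁ h₂ : X → Bool} (hh₁ : h₁ ∈ versionSpace H S)
    (hh₂ : h₂ ∈ versionSpace H S) (hd : (dist x z : EReal) < stabilityRadius H S z) :
    h₁ z = h₂ x := by
  have hdist : (-1 : EReal) ≤ dist x z :=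
    (by simp : (-1 : EReal) ≤ 0).trans (EReal.coe_nonneg.2 dist_nonneg)
  obtain ⟨η, hη, hz, hlt⟩ := (lt_stabilityRadius_iff hdist).1 hd
  obtain ⟨b, hb⟩ := mem_ASet_iff_exists_common_label.1 hz
  have hx : x ∈ Metric.ball z η := EReal.coe_lt_coe_iff.1 hlt
  exact (hb h₁ hh₁ z (Metric.mem_ball_self hη)).trans (hb h₂ hh₂ x hx).symm

theorem robustlyReliableBall_erm_stabilityRadius (H : Set (X → Bool)) :
    RobustlyReliableBall H lossST (erm H) (stabilityRadius H) := by
  refine ⟨fun S z => (stabilityRadius_eq_neg_one_or_pos H S z).imp_right le_of_lt,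
    fun hs hH S hS => ?_⟩
  have hhs : hs ∈ versionSpace H S := mem_versionSpace_iff.2 ⟨hH, hS⟩
  have herm : erm H S ∈ versionSpace H S := erm_mem_versionSpace ⟨hs, hhs⟩
  refine ⟨fun x z _ hd => lossST_eq_zero_iff.2 (eq_of_dist_lt_stabilityRadius herm hhs hd),
    fun z hzero => ?_⟩
  have hne : stabilityRadius H S z ≠ 0 := by
    rcases stabilityRadius_eq_neg_one_or_pos H S z with hneg | hpos
    · simp [hneg]
    · exact hpos.ne'
  exact absurd hzero hne

end MetricBall

/-- Theorem 3.2 (for `ℓ_ST`): (a) there is a robustly-reliable learner whose robustly-reliable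
region at each level `η > 0` contains `A(S,η)`, for every target `h* ∈ H` and every sample
labeled by it; (b) for every robustly-reliable learner, every sample and every `η > 0`, the
robustly-reliable region at level `η` is contained in `A(S,η)`. -/
theorem rr_region_eq_ASet_ST {X : Type*} [MetricSpace X] (H : Set (X → Bool)) :
    (∃ (hyp : List (X × Bool) → X → Bool) (rad : List (X × Bool) → X → EReal),
      RobustlyReliableBall H lossST hyp rad ∧
      ∀ hs ∈ H, ∀ S : List (X × Bool), labeledBy S hs → ∀ η : ℝ, 0 < η →
        ASet H S η ⊆ RRregion rad S η) ∧
    (∀ (hyp : List (X × Bool) → X → Bool) (rad : List (X × Bool) → X → EReal),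
      RobustlyReliableBall H lossST hyp rad →
      ∀ (S : List (X × Bool)) (η : ℝ), 0 < η →
        RRregion rad S η ⊆ ASet H S η) :=
  ⟨⟨erm H, stabilityRadius H, robustlyReliableBall_erm_stabilityRadius H,
      fun _ _ S _ _ hη => ASet_subset_RRregion_stabilityRadius H S hη⟩,
    fun _ _ hL S η _ => hL.RRregion_subset_ASet S η⟩
end
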